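/- For D ≤ 2, two continuous ℤ^D-periodic families of unitary m×m matrices α_0, α_1 are homotopic through continuous ℤ^D-periodic unitary families if and only if deg_j(det α_0) = deg_j(det α_1) for all j ∈ {1,…,D}, where deg_j denotes the winding number of the determinant along the j-th coordinate. -/

import Mathlib

/-- `n` is the winding number of the (unit-circle valued) map `u : ℝ → ℂ` over one
period: there is a continuous argument `θ` of `u` with `θ 1 = θ 0 + 2πn`. -/
def IsWindingNumber (u : ℝ → ℂ) (n : ℤ) : Prop :=
  ∃ θ : ℝ → ℝ, Continuous θ ∧ (∀ t, u t = Complex.exp (Complex.I * (θ t : ℂ))) ∧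
    θ 1 = θ 0 + 2 * Real.pi * (n : ℝ)

/-!
Taking determinants reduces the classification to scalar families. Over the simply connected space
`ι → ℝ` such a family has a continuous argument, the argument changes by `2π` times the `j`-th
winding number under a unit step in direction `j`, and so two families with equal winding numbers
have arguments with periodic difference, along which they are deformed into each other.

For the determinant to be a complete invariant, let `D ≤ 2` and `m ≥ 2`. A column of a unitary
family is a map from the `D`-torus to the unit sphere of `ℂ ^ m`, of real dimension
`2 * m - 1 > D`. A smooth approximation misses some direction by Sard's theorem, so the column can
be moved to a constant basis vector, and the motion is implemented by multiplication with complex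
reflections that depend continuously on the two vectors they match. By unitarity the family is then
block diagonal with a block `1`, and induction on `m` ends at `1 × 1` matrices, which are their own
determinants.
-/

open Matrix
open scoped ContDiff InnerProductSpace

section Periodic

variable {ι X : Type*}

/-- `f` is invariant under translation by the lattice `ℤ^ι`. -/
def IsIntPeriodic (f : (ι → ℝ) → X) : Prop :=
  ∀ (k : ι → ℝ) (n : ι → ℤ), f (k + fun i => (n i : ℝ)) = f k

theorem isIntPeriodic_const (x : X) : IsIntPeriodic fun _ : ι → ℝ => x :=
  fun _ _ => rfl

theorem isIntPeriodic_iff_periodic_single [Finite ι] [DecidableEq ι] {f : (ι → ℝ) → X} :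
    IsIntPeriodic f ↔ ∀ j, Function.Periodic f (Pi.single j 1) := by
  cases nonempty_fintype ι
  refine ⟨fun hf j k => ?_, fun hf k n => ?_⟩
  · have hj : (fun i => ((Pi.single j 1 : ι → ℤ) i : ℝ)) = Pi.single j 1 := by
      ext i
      simp [Pi.single_apply]
    exact hj ▸ hf k (Pi.single j 1)
  · have hn : (fun i => (n i : ℝ)) = ∑ j, n j • Pi.single j (1 : ℝ) := by
      simpa [← Pi.single_smul] using (Finset.univ_sum_single fun i => (n i : ℝ)).symm
    rw [hn]
    exact Finset.sum_induction _ (Function.Periodic f) (fun _ _ => .add_period)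
      (fun x => by rw [add_zero]) (fun j _ => (hf j).zsmul (n j)) k

theorem IsIntPeriodic.uniformContinuous [Finite ι] [PseudoMetricSpace X]
    {f : (ι → ℝ) → X} (hf : IsIntPeriodic f) (hc : Continuous f) : UniformContinuous f := by
  cases nonempty_fintype ι
  rw [Metric.uniformContinuous_iff]
  intro ε hε
  have huc : UniformContinuousOn f (Metric.closedBall 0 2) :=
    (isCompact_closedBall _ _).uniformContinuousOn_of_continuous hc.continuousOn
  obtain ⟨δ, hδ, H⟩ := Metric.uniformContinuousOn_iff.1 huc ε hε
  refine ⟨min δ 1, by positivity, fun {x y} hxy => ?_⟩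
  let n : ι → ℤ := fun i => -⌊y i⌋
  rw [← hf x n, ← hf y n]
  rw [← dist_add_right x y fun i => (n i : ℝ)] at hxy
  have hy : dist (y + fun i => (n i : ℝ)) 0 ≤ 1 := by
    refine (dist_pi_le_iff zero_le_one).2 fun i => ?_
    simpa [n, ← sub_eq_add_neg, abs_of_nonneg] using (Int.fract_lt_one (y i)).le
  refine H _ ?_ _ (Metric.mem_closedBall.2 (by linarith)) (hxy.trans_le (min_le_left _ _))
  have hxy_one := hxy.trans_le (min_le_right δ 1)
  exact (dist_triangle _ _ _).trans (by linarith)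

theorem IsIntPeriodic.exists_contDiff_dist_lt [Fintype ι] {E : Type*} [NormedAddCommGroup E]
    [NormedSpace ℝ E] [CompleteSpace E] {f : (ι → ℝ) → E} (hf : IsIntPeriodic f)
    (hc : Continuous f) {ε : ℝ} (hε : 0 < ε) :
    ∃ g : (ι → ℝ) → E, ContDiff ℝ ∞ g ∧ IsIntPeriodic g ∧ ∀ k, dist (g k) (f k) < ε := by
  obtain ⟨δ, hδ, H⟩ := Metric.uniformContinuous_iff.1 (hf.uniformContinuous hc) _ (half_pos hε)
  let φ : ContDiffBump (0 : ι → ℝ) := ⟨δ / 2, δ, half_pos hδ, half_lt_self hδ⟩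
  refine ⟨MeasureTheory.convolution (φ.normed MeasureTheory.volume) f
    (ContinuousLinearMap.lsmul ℝ ℝ) MeasureTheory.volume, ?_, fun k n => ?_, fun k => ?_⟩
  · exact φ.hasCompactSupport_normed.contDiff_convolution_left _ φ.contDiff_normed
      hc.locallyIntegrable
  · simp only [MeasureTheory.convolution, add_sub_right_comm, hf (k - _) n]
  · exact (φ.dist_normed_convolution_le hc.aestronglyMeasurable fun _ hy => (H hy).le).trans_lt
      (half_lt_self hε)

end Periodic

section UnitaryFamily

variable {ι R S : Type*} [Monoid R] [StarMul R] [TopologicalSpace R]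
  [Monoid S] [StarMul S] [TopologicalSpace S]

/-- A continuous `ℤ^ι`-periodic family of unitary elements of `R`. -/
structure IsUnitaryFamily (α : (ι → ℝ) → R) : Prop where
  continuous : Continuous α
  mem_unitary : ∀ k, α k ∈ unitary R
  periodic : IsIntPeriodic α

/-- Homotopy of families through continuous `ℤ^ι`-periodic unitary families. The homotopy
parameter ranges over all of `ℝ`, with the two families at the parameters `0` and `1`. -/
def UnitaryHomotopic (α β : (ι → ℝ) → R) : Prop :=
  ∃ A : ℝ → (ι → ℝ) → R,
    Continuous (fun p : ℝ × (ι → ℝ) => A p.1 p.2) ∧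
    (∀ t k, A t k ∈ unitary R) ∧
    (∀ t, IsIntPeriodic (A t)) ∧
    (∀ k, A 0 k = α k) ∧ (∀ k, A 1 k = β k)

namespace IsUnitaryFamily

theorem map {α : (ι → ℝ) → R} (hα : IsUnitaryFamily α) {φ : R → S} (hφ : Continuous φ)
    (hφu : ∀ r ∈ unitary R, φ r ∈ unitary S) : IsUnitaryFamily fun k => φ (α k) where
  continuous := hφ.comp hα.continuous
  mem_unitary k := hφu _ (hα.mem_unitary k)
  periodic k n := congrArg φ (hα.periodic k n)

theorem star [ContinuousStar R] {α : (ι → ℝ) → R} (hα : IsUnitaryFamily α) :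
    IsUnitaryFamily (star α) :=
  hα.map continuous_star fun _ => Unitary.star_mem

end IsUnitaryFamily

namespace UnitaryHomotopic

variable {α β γ : (ι → ℝ) → R}

theorem isUnitaryFamily_right (h : UnitaryHomotopic α β) : IsUnitaryFamily β := by
  obtain ⟨A, hc, hu, hp, -, h1⟩ := h
  obtain rfl : A 1 = β := funext h1
  exact ⟨hc.comp (Continuous.prodMk_right 1), hu 1, hp 1⟩

theorem refl (hα : IsUnitaryFamily α) : UnitaryHomotopic α α :=
  ⟨fun _ => α, hα.continuous.comp continuous_snd, fun _ => hα.mem_unitary, fun _ => hα.periodic,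
    fun _ => rfl, fun _ => rfl⟩

theorem symm (h : UnitaryHomotopic α β) : UnitaryHomotopic β α := by
  obtain ⟨A, hc, hu, hp, h0, h1⟩ := h
  exact ⟨fun t => A (1 - t),
    hc.comp (f := fun p : ℝ × (ι → ℝ) => (1 - p.1, p.2)) (by fun_prop),
    fun t => hu (1 - t), fun t => hp (1 - t), by simpa using h1, by simpa using h0⟩

theorem map (h : UnitaryHomotopic α β) {φ : R → S} (hφ : Continuous φ)
    (hφu : ∀ r ∈ unitary R, φ r ∈ unitary S) :
    UnitaryHomotopic (fun k => φ (α k)) (fun k => φ (β k)) := by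
  obtain ⟨A, hc, hu, hp, h0, h1⟩ := h
  exact ⟨fun t k => φ (A t k), hφ.comp hc, fun t k => hφu _ (hu t k),
    fun t k n => congrArg φ (hp t k n), fun k => congrArg φ (h0 k), fun k => congrArg φ (h1 k)⟩

variable [ContinuousMul R]

theorem mul {α' β' : (ι → ℝ) → R} (h : UnitaryHomotopic α β) (h' : UnitaryHomotopic α' β') :
    UnitaryHomotopic (α * α') (β * β') := by
  obtain ⟨A, hc, hu, hp, h0, h1⟩ := h
  obtain ⟨A', hc', hu', hp', h0', h1'⟩ := h'
  exact ⟨fun t k => A t k * A' t k, hc.mul hc', fun t k => mul_mem (hu t k) (hu' t k),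
    fun t k n => congrArg₂ (· * ·) (hp t k n) (hp' t k n),
    fun k => congrArg₂ (· * ·) (h0 k) (h0' k), fun k => congrArg₂ (· * ·) (h1 k) (h1' k)⟩

-- The pointwise product `A * star β * B` of two consecutive homotopies replaces concatenation.
theorem trans [ContinuousStar R] (h : UnitaryHomotopic α β) (h' : UnitaryHomotopic β γ) :
    UnitaryHomotopic α γ := by
  have hβ := h.isUnitaryFamily_right
  have hβ_left : star β * β = 1 := funext fun k => Unitary.star_mul_self_of_mem (hβ.mem_unitary k)
  have hβ_right : β * star β = 1 := funext fun k => Unitary.mul_star_self_of_mem (hβ.mem_unitary k)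
  have H : UnitaryHomotopic (α * star β * β) (β * star β * γ) := (h.mul (refl hβ.star)).mul h'
  rwa [hβ_right, one_mul, mul_assoc, hβ_left, mul_one] at H

end UnitaryHomotopic

end UnitaryFamily

section ContinuousArg

variable {X Y : Type*} [TopologicalSpace X] [TopologicalSpace Y]

/-- `θ` is a continuous choice of argument for the circle-valued function `f`. -/
structure IsContinuousArg (θ : X → ℝ) (f : X → ℂ) : Prop where
  continuous : Continuous θ
  eq_exp : ∀ x, f x = Complex.exp (Complex.I * (θ x : ℂ))

theorem exists_isContinuousArg [SimplyConnectedSpace X] [LocallyPathConnectedSpace X] {f : X → ℂ}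
    (hf : Continuous f) (hu : ∀ x, f x ∈ unitary ℂ) : ∃ θ, IsContinuousArg θ f := by
  obtain ⟨x₀⟩ := (inferInstance : Nonempty X)
  let F : C(X, Circle) :=
    ⟨fun x => ⟨f x, mem_sphere_zero_iff_norm.2 (CStarRing.norm_of_mem_unitary (hu x))⟩,
      hf.subtype_mk _⟩
  obtain ⟨t, ht⟩ := Circle.exp_surjective (F x₀)
  obtain ⟨θ, ⟨-, hθ⟩, -⟩ := Circle.isCoveringMap_exp.existsUnique_continuousMap_lifts F x₀ t ht
  refine ⟨θ, θ.continuous, fun x => ?_⟩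
  rw [mul_comm, ← Circle.coe_exp]
  exact congrArg Subtype.val (congrFun hθ x).symm

namespace IsContinuousArg

theorem comp {θ : X → ℝ} {f : X → ℂ} (hθ : IsContinuousArg θ f) {g : Y → X} (hg : Continuous g) :
    IsContinuousArg (θ ∘ g) (f ∘ g) :=
  ⟨hθ.continuous.comp hg, fun y => hθ.eq_exp (g y)⟩

theorem exists_eq_add_two_pi_mul_int [PreconnectedSpace X] {θ η : X → ℝ} {f : X → ℂ}
    (hθ : IsContinuousArg θ f) (hη : IsContinuousArg η f) :
    ∃ n : ℤ, ∀ x, θ x = η x + 2 * Real.pi * n := by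
  have hexp (x : X) : Circle.exp (θ x) = Circle.exp (η x) :=
    Circle.ext <| by simp only [Circle.coe_exp, mul_comm _ Complex.I, ← hθ.eq_exp, ← hη.eq_exp]
  rcases isEmpty_or_nonempty X with _ | ⟨⟨x₀⟩⟩
  · exact ⟨0, isEmptyElim⟩
  obtain ⟨n, hn⟩ := Circle.exp_eq_exp.1 (hexp x₀)
  refine ⟨n, congrFun <| Circle.isCoveringMap_exp.eq_of_comp_eq hθ.continuous
    (hη.continuous.add continuous_const) (funext fun x => ?_) x₀ ?_⟩
  · rw [Function.comp_apply, Function.comp_apply, hexp x]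
    exact Circle.exp_eq_exp.2 ⟨-n, by push_cast; ring⟩
  · linarith

theorem exists_comp_eq_add_two_pi_mul_int [PreconnectedSpace X] {θ : X → ℝ} {f : X → ℂ}
    (hθ : IsContinuousArg θ f) {g : X → X} (hg : Continuous g) (hfg : ∀ x, f (g x) = f x) :
    ∃ n : ℤ, ∀ x, θ (g x) = θ x + 2 * Real.pi * n :=
  exists_eq_add_two_pi_mul_int ⟨hθ.continuous.comp hg, fun x => hfg x ▸ hθ.eq_exp (g x)⟩ hθ

end IsContinuousArg

end ContinuousArg

section WindingNumber

theorem UnitaryHomotopic.of_isContinuousArg {ι : Type*} {f g : (ι → ℝ) → ℂ} {θ η : (ι → ℝ) → ℝ}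
    (hf : IsUnitaryFamily f) (hθ : IsContinuousArg θ f) (hη : IsContinuousArg η g)
    (hper : IsIntPeriodic (η - θ)) : UnitaryHomotopic f g := by
  have hexp (r : ℝ) : Complex.exp (Complex.I * r) ∈ unitary ℂ := by
    rw [Unitary.mem_iff_self_mul_star, Complex.star_def, ← Complex.exp_conj, ← Complex.exp_add]
    simp
  have hθc := hθ.continuous
  have hηc := hη.continuous
  refine ⟨fun t k => f k * Complex.exp (Complex.I * (t * (η - θ) k : ℝ)), ?_,
    fun t k => mul_mem (hf.mem_unitary k) (hexp _), fun t k n => ?_, fun k => ?_, fun k => ?_⟩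
  · exact (hf.continuous.comp continuous_snd).mul (by dsimp; fun_prop)
  · simp only [hper k n, hf.periodic k n]
  · simp
  · simp only [hθ.eq_exp, hη.eq_exp, ← Complex.exp_add, ← mul_add]
    simp

theorem IsWindingNumber.unique {u : ℝ → ℂ} {m n : ℤ} (hm : IsWindingNumber u m)
    (hn : IsWindingNumber u n) : m = n := by
  obtain ⟨θ, hθ, hθu, hm⟩ := hm
  obtain ⟨η, hη, hηu, hn⟩ := hn
  obtain ⟨c, hc⟩ := IsContinuousArg.exists_eq_add_two_pi_mul_int ⟨hθ, hθu⟩ ⟨hη, hηu⟩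
  rw [hc 1, hc 0, hn, add_right_comm] at hm
  exact_mod_cast (mul_left_cancel₀ Real.two_pi_pos.ne' (add_left_cancel hm)).symm

variable {ι : Type*} [DecidableEq ι] {f g : (ι → ℝ) → ℂ}

theorem IsContinuousArg.isWindingNumber_single {θ : (ι → ℝ) → ℝ} (hθ : IsContinuousArg θ f)
    {j : ι} {n : ℤ} (h : θ (Pi.single j 1) = θ 0 + 2 * Real.pi * n) :
    IsWindingNumber (fun t => f (Pi.single j t)) n :=
  ⟨fun t => θ (Pi.single j t), hθ.continuous.comp (continuous_single (A := fun _ => ℝ) j),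
    fun _ => hθ.eq_exp _, by simpa using h⟩

variable [Finite ι]

theorem UnitaryHomotopic.exists_isWindingNumber_single (h : UnitaryHomotopic f g) (j : ι) :
    ∃ n : ℤ, IsWindingNumber (fun t => f (Pi.single j t)) n ∧
      IsWindingNumber (fun t => g (Pi.single j t)) n := by
  obtain ⟨A, hc, hu, hp, h0, h1⟩ := h
  obtain rfl : A 0 = f := funext h0
  obtain rfl : A 1 = g := funext h1
  obtain ⟨Θ, hΘ⟩ := exists_isContinuousArg hc fun p => hu p.1 p.2
  obtain ⟨n, hn⟩ := hΘ.exists_comp_eq_add_two_pi_mul_int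
    (g := fun p => (p.1, p.2 + Pi.single j 1)) (by fun_prop)
    fun p => isIntPeriodic_iff_periodic_single.1 (hp p.1) j p.2
  have hwind (t : ℝ) : IsWindingNumber (fun s => A t (Pi.single j s)) n :=
    (hΘ.comp (Continuous.prodMk_right t)).isWindingNumber_single (by simpa using hn (t, 0))
  exact ⟨n, hwind 0, hwind 1⟩

theorem unitaryHomotopic_iff_isWindingNumber_single (hf : IsUnitaryFamily f)
    (hg : IsUnitaryFamily g) :
    UnitaryHomotopic f g ↔ ∀ (j : ι) (n : ℤ), IsWindingNumber (fun t => f (Pi.single j t)) n ↔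
      IsWindingNumber (fun t => g (Pi.single j t)) n := by
  refine ⟨fun h j n => ?_, fun h => ?_⟩
  · obtain ⟨m, hfm, hgm⟩ := h.exists_isWindingNumber_single j
    exact ⟨fun hn => hn.unique hfm ▸ hgm, fun hn => hn.unique hgm ▸ hfm⟩
  obtain ⟨θ, hθ⟩ := exists_isContinuousArg hf.continuous hf.mem_unitary
  obtain ⟨η, hη⟩ := exists_isContinuousArg hg.continuous hg.mem_unitary
  refine .of_isContinuousArg hf hθ hη (isIntPeriodic_iff_periodic_single.2 fun j k => ?_)
  obtain ⟨a, ha⟩ := hθ.exists_comp_eq_add_two_pi_mul_int (continuous_add_const (Pi.single j 1))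
    (isIntPeriodic_iff_periodic_single.1 hf.periodic j)
  obtain ⟨b, hb⟩ := hη.exists_comp_eq_add_two_pi_mul_int (continuous_add_const (Pi.single j 1))
    (isIntPeriodic_iff_periodic_single.1 hg.periodic j)
  have hga := (h j a).1 (hθ.isWindingNumber_single (by simpa using ha 0))
  have hab : a = b := hga.unique (hη.isWindingNumber_single (by simpa using hb 0))
  simp only [Pi.sub_apply, ha, hb, hab, add_sub_add_right_eq_sub]

end WindingNumber

section ComplexReflection

variable {E : Type*} [NormedAddCommGroup E] [InnerProductSpace ℂ E]

/-- The operator on a complex Hilbert space which fixes `uᗮ` and multiplies `u` by the phase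
`-conj c / c`, where `c = ‖u‖ ^ 2 / 2 + b * I`. For `b = 0` it is the reflection in `uᗮ`. -/
noncomputable def complexReflection (u : E) (b : ℝ) : E →L[ℂ] E :=
  1 - ((‖u‖ ^ 2 / 2 + b * Complex.I : ℂ))⁻¹ • InnerProductSpace.rankOne ℂ u u

theorem complexReflection_apply (u : E) (b : ℝ) (x : E) :
    complexReflection u b x = x - ((‖u‖ ^ 2 / 2 + b * Complex.I : ℂ)⁻¹ * ⟪u, x⟫_ℂ) • u := by
  simp [complexReflection, mul_smul]

theorem sq_norm_half_add_mul_I_ne_zero {F : Type*} [NormedAddCommGroup F] {u : F} (hu : u ≠ 0)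
    (b : ℝ) : (‖u‖ ^ 2 / 2 + b * Complex.I : ℂ) ≠ 0 := fun h => by
  have := congrArg Complex.re h
  simp [← Complex.ofReal_pow, hu] at this

theorem complexReflection_mul_complexReflection_neg {u : E} (hu : u ≠ 0) (b : ℝ) :
    complexReflection u b * complexReflection u (-b) = 1 := by
  ext x
  rw [mul_apply_eq_comp, complexReflection_apply, complexReflection_apply, one_apply_eq_self,
    inner_sub_right, inner_smul_right, inner_self_eq_norm_sq_to_K]
  have hc := sq_norm_half_add_mul_I_ne_zero hu b
  have hc' := sq_norm_half_add_mul_I_ne_zero hu (-b)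
  set c : ℂ := ‖u‖ ^ 2 / 2 + b * Complex.I with hc_def
  set c' : ℂ := ‖u‖ ^ 2 / 2 + (-b : ℝ) * Complex.I with hc'_def
  have hcc' : (‖u‖ ^ 2 : ℂ) = c + c' := by rw [hc_def, hc'_def]; push_cast; ring
  rw [sub_sub, sub_eq_self, ← add_smul]
  convert zero_smul ℂ u
  simp only [Complex.coe_algebraMap, hcc']
  field_simp
  ring

theorem continuous_complexReflection {X : Type*} [TopologicalSpace X] {u : X → E} {b : X → ℝ}
    (hu : Continuous u) (hb : Continuous b) (hu0 : ∀ x, u x ≠ 0) :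
    Continuous fun x => complexReflection (u x) (b x) := by
  have hc : Continuous fun x => (‖u x‖ ^ 2 / 2 + b x * Complex.I : ℂ) := by fun_prop
  exact continuous_const.sub ((hc.inv₀ fun x => sq_norm_half_add_mul_I_ne_zero (hu0 x) (b x)).smul
    ((ContinuousLinearMap.smulRightL ℂ E E).continuous₂.comp
      (((innerSL ℂ).continuous.comp hu).prodMk hu)))

theorem complexReflection_add_neg {v w : E} (h : ‖v‖ = ‖w‖) (hvw : v + w ≠ 0) :
    complexReflection (v + w) (⟪w, v⟫_ℂ).im (-v) = w := by
  have hinner : (‖v + w‖ ^ 2 / 2 + (⟪w, v⟫_ℂ).im * Complex.I : ℂ) = ⟪v + w, v⟫_ℂ := by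
    have hre : (⟪v, w⟫_ℂ).re = (⟪w, v⟫_ℂ).re := inner_re_symm (𝕜 := ℂ) v w
    rw [← Complex.ofReal_pow, norm_add_sq (𝕜 := ℂ), inner_add_left, inner_self_eq_norm_sq_to_K, h]
    refine Complex.ext ?_ (by simp [← Complex.ofReal_pow])
    suffices (‖w‖ ^ 2 + 2 * (⟪w, v⟫_ℂ).re + ‖w‖ ^ 2) / 2 = ‖w‖ ^ 2 + (⟪w, v⟫_ℂ).re by
      simpa [← Complex.ofReal_pow, hre]
    ring
  rw [complexReflection_apply, inner_neg_right, hinner, mul_neg, inv_mul_cancel₀]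
  · simp
  · exact hinner ▸ sq_norm_half_add_mul_I_ne_zero hvw _

variable [CompleteSpace E]

theorem star_complexReflection (u : E) (b : ℝ) :
    star (complexReflection u b) = complexReflection u (-b) := by
  simp [complexReflection, ContinuousLinearMap.star_eq_adjoint, sub_eq_add_neg]

theorem complexReflection_mem_unitary {u : E} (hu : u ≠ 0) (b : ℝ) :
    complexReflection u b ∈ unitary (E →L[ℂ] E) := by
  have h := complexReflection_mul_complexReflection_neg hu (-b)
  rw [neg_neg] at h
  rw [Unitary.mem_iff, star_complexReflection]
  exact ⟨h, complexReflection_mul_complexReflection_neg hu b⟩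

end ComplexReflection

section UnitVectorFamily

variable {ι E : Type*} [NormedAddCommGroup E]

/-- A continuous `ℤ^ι`-periodic family of unit vectors. -/
structure IsUnitVectorFamily (v : (ι → ℝ) → E) : Prop where
  continuous : Continuous v
  norm_eq_one : ∀ k, ‖v k‖ = 1
  periodic : IsIntPeriodic v

theorem isUnitVectorFamily_const {e : E} (he : ‖e‖ = 1) :
    IsUnitVectorFamily fun _ : ι → ℝ => e :=
  ⟨continuous_const, fun _ => he, isIntPeriodic_const e⟩

theorem isUnitVectorFamily_normalize [NormedSpace ℝ E] {v : (ι → ℝ) → E} (hv : Continuous v)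
    (hv0 : ∀ k, v k ≠ 0) (hp : IsIntPeriodic v) :
    IsUnitVectorFamily fun k => NormedSpace.normalize (v k) where
  continuous := (hv.norm.inv₀ fun k => norm_ne_zero_iff.2 (hv0 k)).smul hv
  norm_eq_one k := NormedSpace.norm_normalize_eq_one_iff.2 (hv0 k)
  periodic k n := congrArg _ (hp k n)

theorem sub_smul_add_smul_ne_zero [NormedSpace ℝ E] {v w : E} (h : ‖v‖ = ‖w‖) (hvw : w ≠ -v)
    (s : ℝ) : (2 - s) • v + s • w ≠ 0 := fun h0 => by
  have hv : ‖v‖ ≠ 0 := fun hv => hvw (by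
    rw [norm_eq_zero.1 hv, norm_eq_zero.1 (h ▸ hv : ‖w‖ = 0), neg_zero])
  have hnorm := congrArg norm (eq_neg_of_add_eq_zero_left h0)
  rw [norm_neg, norm_smul, norm_smul, ← h, mul_left_inj' hv, Real.norm_eq_abs, Real.norm_eq_abs,
    ← sq_eq_sq_iff_abs_eq_abs] at hnorm
  obtain rfl : s = 1 := by linarith
  refine hvw (eq_neg_of_add_eq_zero_right ?_)
  simpa [show (2 - 1 : ℝ) = 1 by norm_num] using h0

variable [InnerProductSpace ℂ E] [CompleteSpace E]

theorem IsUnitVectorFamily.exists_unitaryHomotopic_one_apply_eq {v w : (ι → ℝ) → E}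
    (hv : IsUnitVectorFamily v) (hw : IsUnitVectorFamily w) (hne : ∀ k, w k ≠ -v k) :
    ∃ ρ : (ι → ℝ) → E →L[ℂ] E, UnitaryHomotopic 1 ρ ∧ ∀ k, ρ k (v k) = w k := by
  -- As the direction moves from `2 • v` to `v + w`, the image of `-v` moves from `v` to `w`.
  let T (t : ℝ) (k : ι → ℝ) : E →L[ℂ] E :=
    complexReflection ((2 - t) • v k + t • w k) (t * (⟪w k, v k⟫_ℂ).im)
  have hvw (k) : ‖v k‖ = ‖w k‖ := (hv.norm_eq_one k).trans (hw.norm_eq_one k).symm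
  have hne0 (t : ℝ) (k) : (2 - t) • v k + t • w k ≠ 0 := sub_smul_add_smul_ne_zero (hvw k) (hne k) t
  have hvc := hv.continuous
  have hwc := hw.continuous
  have hT : UnitaryHomotopic (T 0) (T 1) := by
    refine ⟨T, continuous_complexReflection (by fun_prop) (by fun_prop) fun p => hne0 _ _,
      fun t k => complexReflection_mem_unitary (hne0 t k) _, fun t k n => ?_,
      fun _ => rfl, fun _ => rfl⟩
    simp only [T, hv.periodic k n, hw.periodic k n]
  have hT0 := hT.symm.isUnitaryFamily_right
  have hT0_star (k) : T 0 k * star (T 0 k) = 1 := Unitary.mul_star_self_of_mem (hT0.mem_unitary k)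
  have hT0_neg (k) : T 0 k (-v k) = v k := by
    have h := complexReflection_add_neg (rfl : ‖v k‖ = ‖v k‖) (by simpa [two_smul] using hne0 0 k)
    simpa [T, two_smul, ← Complex.ofReal_pow] using h
  have hT1_neg (k) : T 1 k (-v k) = w k := by
    have h := complexReflection_add_neg (hvw k) fun h => hne k (eq_neg_of_add_eq_zero_right h)
    simpa [T, show (2 - 1 : ℝ) = 1 by norm_num] using h
  refine ⟨T 1 * star (T 0), ?_, fun k => ?_⟩
  · have h := hT.mul (.refl hT0.star)
    rwa [(funext hT0_star : T 0 * star (T 0) = 1)] at h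
  · have hT0_star_apply : star (T 0 k) (v k) = -v k := by
      conv_lhs => rw [← hT0_neg k]
      rw [← mul_apply_eq_comp, Unitary.star_mul_self_of_mem (hT0.mem_unitary k), one_apply_eq_self]
    rw [Pi.mul_apply, mul_apply_eq_comp, Pi.star_apply, hT0_star_apply, hT1_neg]

end UnitVectorFamily

section GeneralPosition

theorem smul_ne_neg_of_dist_lt_norm {E : Type*} [SeminormedAddCommGroup E] [NormedSpace ℝ E]
    {x y : E} (h : dist x y < ‖y‖) {r : ℝ} (hr : 0 ≤ r) : r • x ≠ -y := fun hxy => by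
  obtain rfl : y = -(r • x) := by rw [hxy, neg_neg]
  have hdist : dist x (-(r • x)) = (1 + r) * ‖x‖ := by
    rw [dist_eq_norm, sub_neg_eq_add, (by module : x + r • x = (1 + r) • x), norm_smul,
      Real.norm_of_nonneg (by positivity)]
  rw [hdist, norm_neg, norm_smul, Real.norm_of_nonneg hr] at h
  linarith [norm_nonneg x]

theorem dense_setOf_forall_smul_ne {F E : Type*} [NormedAddCommGroup F] [NormedSpace ℝ F]
    [FiniteDimensional ℝ F] [NormedAddCommGroup E] [NormedSpace ℝ E] [FiniteDimensional ℝ E]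
    {f : F → E} (hf : ContDiff ℝ 1 f) (h : Module.finrank ℝ F + 1 < Module.finrank ℝ E) :
    Dense {w | ∀ (x : F) (r : ℝ), r • f x ≠ w} := by
  have hsmul : ContDiff ℝ 1 fun p : F × ℝ => p.2 • f p.1 :=
    contDiff_snd.smul (hf.comp contDiff_fst)
  refine (hsmul.dense_compl_range_of_finrank_lt_finrank (by simpa using h)).mono ?_
  exact fun w hw x r hxr => hw ⟨(x, r), hxr⟩

variable {ι E : Type*} [Fintype ι] [NormedAddCommGroup E] [InnerProductSpace ℂ E]
  [FiniteDimensional ℂ E]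

theorem IsUnitVectorFamily.exists_unitaryHomotopic_one_apply_eq_const {v : (ι → ℝ) → E}
    (hv : IsUnitVectorFamily v) (h : Fintype.card ι + 1 < Module.finrank ℝ E) {e : E}
    (he : ‖e‖ = 1) : ∃ ρ : (ι → ℝ) → E →L[ℂ] E, UnitaryHomotopic 1 ρ ∧ ∀ k, ρ k (v k) = e := by
  have : FiniteDimensional ℝ E := FiniteDimensional.complexToReal E
  have : CompleteSpace E := FiniteDimensional.complete ℂ E
  obtain ⟨f, hf, hfp, hfv⟩ := hv.periodic.exists_contDiff_dist_lt hv.continuous one_pos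
  obtain ⟨w, hwf, hwe⟩ := (dense_setOf_forall_smul_ne (hf.of_le (by simp))
    (by simpa using h)).exists_dist_lt e one_pos
  have hfv' (k) {r : ℝ} (hr : 0 ≤ r) : r • f k ≠ -v k :=
    smul_ne_neg_of_dist_lt_norm (hv.norm_eq_one k ▸ hfv k) hr
  have hf0 (k) : f k ≠ 0 := fun hk => by
    simpa [hk, hv.norm_eq_one] using hfv k
  have hw0 : w ≠ 0 := fun hw => hwf 0 0 (by simp [hw])
  have hf1 := isUnitVectorFamily_normalize hf.continuous hf0 hfp
  have hw1 : IsUnitVectorFamily fun _ : ι → ℝ => NormedSpace.normalize w :=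
    isUnitVectorFamily_const (NormedSpace.norm_normalize_eq_one_iff.2 hw0)
  obtain ⟨ρ₁, h₁, hρ₁⟩ := hv.exists_unitaryHomotopic_one_apply_eq hf1 fun k =>
    hfv' k (inv_nonneg.2 (norm_nonneg _))
  obtain ⟨ρ₂, h₂, hρ₂⟩ := hf1.exists_unitaryHomotopic_one_apply_eq hw1 fun k hk => by
    refine hwf k (-(‖w‖ * ‖f k‖⁻¹)) ?_
    rw [neg_smul, mul_smul, ← smul_neg]
    exact (congrArg (‖w‖ • ·) hk).symm.trans (NormedSpace.norm_smul_normalize w)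
  obtain ⟨ρ₃, h₃, hρ₃⟩ := hw1.exists_unitaryHomotopic_one_apply_eq (isUnitVectorFamily_const he)
    fun k hk => smul_ne_neg_of_dist_lt_norm (x := w) (he ▸ (dist_comm e w ▸ hwe))
      (inv_nonneg.2 (norm_nonneg w)) (by rw [hk, neg_neg]; rfl)
  refine ⟨ρ₃ * (ρ₂ * ρ₁), by simpa using h₃.mul (h₂.mul h₁), fun k => ?_⟩
  simp only [Pi.mul_apply, mul_apply_eq_comp, hρ₁, hρ₂, hρ₃]

end GeneralPosition

section UnitaryGroup

variable {n o : Type*} [Fintype n] [DecidableEq n] [Fintype o] [DecidableEq o]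
  {R : Type*} [CommRing R]

theorem eq_algebraMap_det [Subsingleton n] (B : Matrix n n R) : B = algebraMap R _ B.det := by
  ext i j
  obtain rfl := Subsingleton.elim i j
  rw [algebraMap_matrix_apply, if_pos rfl, det_eq_elem_of_subsingleton B i]
  rfl

variable [StarRing R]

theorem fromBlocks_one_mem_unitaryGroup_iff {B : Matrix n n R} :
    fromBlocks B 0 0 (1 : Matrix o o R) ∈ unitaryGroup (n ⊕ o) R ↔ B ∈ unitaryGroup n R := by
  simp [mem_unitaryGroup_iff, star_eq_conjTranspose, fromBlocks_conjTranspose,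
    fromBlocks_multiply, ← fromBlocks_one]

theorem reindex_mem_unitaryGroup (e : n ≃ o) {B : Matrix n n R} (hB : B ∈ unitaryGroup n R) :
    reindex e e B ∈ unitaryGroup o R := by
  rw [mem_unitaryGroup_iff, star_eq_conjTranspose, conjTranspose_reindex,
    ← coe_reindexAlgEquiv R R, ← map_mul, ← star_eq_conjTranspose, mem_unitaryGroup_iff.1 hB,
    map_one]

theorem eq_fromBlocks_of_mulVec_single_eq [Unique o] {A : Matrix (n ⊕ o) (n ⊕ o) R}
    (hA : A ∈ unitaryGroup (n ⊕ o) R)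
    (h : A *ᵥ Pi.single (.inr default) 1 = Pi.single (.inr default) 1) :
    A = fromBlocks A.toBlocks₁₁ 0 0 1 := by
  have hstar : star A *ᵥ Pi.single (.inr default) 1 = Pi.single (.inr default) 1 := by
    conv_lhs => rw [← h]
    rw [mulVec_mulVec, mem_unitaryGroup_iff'.1 hA, one_mulVec]
  rw [mulVec_single_one] at h hstar
  conv_lhs => rw [← fromBlocks_toBlocks A]
  congr 1 <;> ext i j
  · simpa [toBlocks₁₂, Unique.eq_default j] using congrFun h (.inl i)
  · simpa [toBlocks₂₁, Unique.eq_default i] using congrFun hstar (.inl j)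
  · rw [Unique.eq_default i, Unique.eq_default j]
    simpa [toBlocks₂₂] using congrFun h (.inr default)

end UnitaryGroup

section MatrixFamily

variable {ι n o : Type*} [Fintype n] [DecidableEq n] [Fintype o] [DecidableEq o]
  {R : Type*} [CommRing R] [StarRing R] [TopologicalSpace R]

theorem IsUnitaryFamily.det [IsTopologicalRing R] {α : (ι → ℝ) → Matrix n n R}
    (hα : IsUnitaryFamily α) : IsUnitaryFamily fun k => (α k).det :=
  hα.map continuous_id.matrix_det fun _ => det_of_mem_unitary

theorem IsUnitaryFamily.reindex {α : (ι → ℝ) → Matrix n n R} (hα : IsUnitaryFamily α)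
    (e : n ≃ o) : IsUnitaryFamily fun k => reindex e e (α k) :=
  hα.map (continuous_id.matrix_reindex e e) fun _ => reindex_mem_unitaryGroup e

namespace UnitaryHomotopic

variable {α β : (ι → ℝ) → Matrix n n R}

theorem det [IsTopologicalRing R] (h : UnitaryHomotopic α β) :
    UnitaryHomotopic (fun k => (α k).det) fun k => (β k).det :=
  h.map continuous_id.matrix_det fun _ => det_of_mem_unitary

theorem of_det_of_subsingleton [IsTopologicalRing R] [Subsingleton n]
    (h : UnitaryHomotopic (fun k => (α k).det) fun k => (β k).det) : UnitaryHomotopic α β := by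
  have H := h.map (continuous_algebraMap R (Matrix n n R)) fun _ =>
    Unitary.map_mem (StarAlgHom.ofId R (Matrix n n R))
  simpa only [← eq_algebraMap_det] using H

theorem fromBlocks_one (h : UnitaryHomotopic α β) :
    UnitaryHomotopic (fun k => fromBlocks (α k) 0 0 (1 : Matrix o o R))
      fun k => fromBlocks (β k) 0 0 1 :=
  h.map (continuous_id.matrix_fromBlocks continuous_const continuous_const continuous_const)
    fun _ => fromBlocks_one_mem_unitaryGroup_iff.2

theorem of_reindex (e : n ≃ o)
    (h : UnitaryHomotopic (fun k => reindex e e (α k)) fun k => reindex e e (β k)) :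
    UnitaryHomotopic α β := by
  simpa using h.map (continuous_id.matrix_reindex e.symm e.symm) fun _ =>
    reindex_mem_unitaryGroup e.symm

end UnitaryHomotopic

variable [Fintype ι]

theorem exists_unitaryHomotopic_mulVec_single_eq {α : (ι → ℝ) → Matrix n n ℂ}
    (hα : IsUnitaryFamily α) (h : Fintype.card ι + 1 < 2 * Fintype.card n) (i : n) :
    ∃ β, UnitaryHomotopic α β ∧ ∀ k, β k *ᵥ Pi.single i 1 = Pi.single i 1 := by
  let Φ : Matrix n n ℂ ≃⋆ₐ[ℂ] (EuclideanSpace ℂ n →L[ℂ] EuclideanSpace ℂ n) := toEuclideanCLM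
  let Ψ : (EuclideanSpace ℂ n →L[ℂ] EuclideanSpace ℂ n) ≃⋆ₐ[ℂ] Matrix n n ℂ := Φ.symm
  have hΦ : Continuous Φ := Φ.toAlgEquiv.toLinearMap.continuous_of_finiteDimensional
  have hΨ : Continuous Ψ := Ψ.toAlgEquiv.toLinearMap.continuous_of_finiteDimensional
  let e : EuclideanSpace ℂ n := EuclideanSpace.single i 1
  have he : ‖e‖ = 1 := by simp [e]
  have hv : IsUnitVectorFamily fun k => Φ (α k) e :=
    { continuous := (hΦ.comp hα.continuous).clm_apply continuous_const
      norm_eq_one := fun k => by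
        rw [ContinuousLinearMap.norm_map_of_mem_unitary
          (Unitary.map_mem Φ (hα.mem_unitary k)), he]
      periodic := fun k m => by simp only [hα.periodic k m] }
  have hcard : Fintype.card ι + 1 < Module.finrank ℝ (EuclideanSpace ℂ n) := by
    rwa [← Module.finrank_mul_finrank ℝ ℂ, Complex.finrank_real_complex, finrank_euclideanSpace]
  obtain ⟨ρ, hρ, hρe⟩ := hv.exists_unitaryHomotopic_one_apply_eq_const hcard he
  have hΨρ : UnitaryHomotopic 1 fun k => Ψ (ρ k) := by
    rw [← (funext fun _ => map_one Ψ : (fun _ => Ψ 1) = (1 : (ι → ℝ) → Matrix n n ℂ))]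
    exact hρ.map hΨ fun _ => Unitary.map_mem Ψ
  refine ⟨fun k => Ψ (ρ k) * α k, ?_, fun k => ?_⟩
  · have hmul := hΨρ.mul (.refl hα)
    rwa [one_mul] at hmul
  · have hΦΨ : Φ (Ψ (ρ k)) (Φ (α k) e) = e := by
      rw [Φ.apply_symm_apply, hρe]
    rw [← mulVec_mulVec]
    exact congrArg WithLp.ofLp hΦΨ

theorem exists_unitaryHomotopic_fromBlocks_one [Unique o]
    {α : (ι → ℝ) → Matrix (n ⊕ o) (n ⊕ o) ℂ} (hα : IsUnitaryFamily α)
    (h : Fintype.card ι + 1 < 2 * Fintype.card (n ⊕ o)) :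
    ∃ δ : (ι → ℝ) → Matrix n n ℂ, IsUnitaryFamily δ ∧
      UnitaryHomotopic α fun k => fromBlocks (δ k) 0 0 1 := by
  obtain ⟨β, hαβ, hβe⟩ := exists_unitaryHomotopic_mulVec_single_eq hα h (.inr default)
  have hβ := hαβ.isUnitaryFamily_right
  have hblock (k) := eq_fromBlocks_of_mulVec_single_eq (hβ.mem_unitary k) (hβe k)
  refine ⟨fun k => (β k).toBlocks₁₁, ⟨?_, fun k => ?_, fun k m => ?_⟩, ?_⟩
  · exact hβ.continuous.matrix_submatrix Sum.inl Sum.inl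
  · exact fromBlocks_one_mem_unitaryGroup_iff.1 (hblock k ▸ hβ.mem_unitary k)
  · simp only [hβ.periodic k m]
  · rwa [← (funext hblock : β = _)]

theorem UnitaryHomotopic.of_det (hι : Fintype.card ι ≤ 2) {α β : (ι → ℝ) → Matrix n n ℂ}
    (hα : IsUnitaryFamily α) (hβ : IsUnitaryFamily β)
    (hdet : UnitaryHomotopic (fun k => (α k).det) fun k => (β k).det) : UnitaryHomotopic α β := by
  induction hn : Fintype.card n generalizing n with
  | zero =>
    have := Fintype.card_eq_zero_iff.1 hn
    exact .of_det_of_subsingleton hdet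
  | succ N ih =>
    rcases subsingleton_or_nontrivial n with _ | _
    · exact .of_det_of_subsingleton hdet
    obtain ⟨i⟩ : Nonempty n := inferInstance
    let e : n ≃ {j // j ≠ i} ⊕ Unit :=
      (Equiv.optionSubtypeNe i).symm.trans (Equiv.optionEquivSumPUnit _)
    have hcard : Fintype.card ι + 1 < 2 * Fintype.card ({j // j ≠ i} ⊕ Unit) := by
      have := Fintype.one_lt_card (α := n)
      rw [← Fintype.card_congr e]
      lia
    have hdet_block (δ : Matrix {j // j ≠ i} {j // j ≠ i} ℂ) :
        (fromBlocks δ 0 0 (1 : Matrix Unit Unit ℂ)).det = δ.det := by simp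
    obtain ⟨δ, hδ, hαδ⟩ := exists_unitaryHomotopic_fromBlocks_one (hα.reindex e) hcard
    obtain ⟨ε, hε, hβε⟩ := exists_unitaryHomotopic_fromBlocks_one (hβ.reindex e) hcard
    have hδα_det := hαδ.det.symm
    have hβε_det := hβε.det
    simp only [det_reindex_self, hdet_block] at hδα_det hβε_det
    have hδε : UnitaryHomotopic δ ε :=
      ih hδ hε ((hδα_det.trans hdet).trans hβε_det) (by simp [hn])
    exact .of_reindex e ((hαδ.trans hδε.fromBlocks_one).trans hβε.symm)

end MatrixFamily

/-- For `D ≤ 2`, two continuous `ℤ^D`-periodic families of unitary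
`m × m` matrices are homotopic through continuous `ℤ^D`-periodic unitary families if
and only if the winding numbers of their determinants along each coordinate direction
coincide. -/
theorem homotopic_iff_equal_det_windings (D m : ℕ) (hD : D ≤ 2)
    (α₀ α₁ : (Fin D → ℝ) → Matrix (Fin m) (Fin m) ℂ)
    (hc0 : Continuous α₀) (hc1 : Continuous α₁)
    (hu0 : ∀ k, α₀ k ∈ Matrix.unitaryGroup (Fin m) ℂ)
    (hu1 : ∀ k, α₁ k ∈ Matrix.unitaryGroup (Fin m) ℂ)
    (hp0 : ∀ (k : Fin D → ℝ) (n : Fin D → ℤ), α₀ (k + fun i => (n i : ℝ)) = α₀ k)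
    (hp1 : ∀ (k : Fin D → ℝ) (n : Fin D → ℤ), α₁ (k + fun i => (n i : ℝ)) = α₁ k) :
    (∃ A : ℝ → (Fin D → ℝ) → Matrix (Fin m) (Fin m) ℂ,
      Continuous (fun p : ℝ × (Fin D → ℝ) => A p.1 p.2) ∧
      (∀ t k, A t k ∈ Matrix.unitaryGroup (Fin m) ℂ) ∧
      (∀ (t : ℝ) (k : Fin D → ℝ) (n : Fin D → ℤ),
        A t (k + fun i => (n i : ℝ)) = A t k) ∧
      (∀ k, A 0 k = α₀ k) ∧ (∀ k, A 1 k = α₁ k))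
    ↔
    (∀ (j : Fin D) (n : ℤ),
      IsWindingNumber (fun t => (α₀ (Pi.single j t)).det) n ↔
      IsWindingNumber (fun t => (α₁ (Pi.single j t)).det) n) := by
  have hα₀ : IsUnitaryFamily α₀ := ⟨hc0, hu0, hp0⟩
  have hα₁ : IsUnitaryFamily α₁ := ⟨hc1, hu1, hp1⟩
  change UnitaryHomotopic α₀ α₁ ↔ _
  rw [← unitaryHomotopic_iff_isWindingNumber_single hα₀.det hα₁.det]
  exact ⟨.det, .of_det (by simpa using hD) hα₀ hα₁⟩
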